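/- For every real number α with 0 < α < 1, there exists a one-sided infinite word x ∈ {a,b}^ℕ with p_x(n) = O(n^{2+α}) and cost c(x) ≥ α; equivalently, for every real β < α, every positive integer k, and every language S ⊆ {a,b}* with p_S(n) = O(n^β), one has Fac(x) ⊄ S^k. -/

import Mathlib

open scoped ENNReal Pointwise

universe u

variable {A : Type u}

/-- The factor of `x` of length `n` starting at position `i`. -/
def wordSeg (x : ℕ → A) (i n : ℕ) : List A := (List.range n).map fun j => x (i + j)

/-- The set of finite factors of a one-sided infinite word (including the empty word). -/
def Fac (x : ℕ → A) : Set (List A) := {u | ∃ i n, u = wordSeg x i n}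

/-- The factor of a two-sided word `x` of length `n` starting at position `i`. -/
def wordSegZ (x : ℤ → A) (i : ℤ) (n : ℕ) : List A := (List.range n).map fun j => x (i + j)

/-- The set of finite factors of a two-sided infinite word (including the empty word). -/
def FacZ (x : ℤ → A) : Set (List A) := {u | ∃ (i : ℤ) (n : ℕ), u = wordSegZ x i n}

/-- The complexity of a language: the number of words of length `n` in it. -/
noncomputable def complexity (L : Set (List A)) (n : ℕ) : ℕ :=
  {u ∈ L | u.length = n}.ncard

/-- The accumulative complexity `p*_L(n) = Σ_{i=0}^{n} p_L(i)`. -/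
noncomputable def accComplexity (L : Set (List A)) (n : ℕ) : ℕ :=
  ∑ i ∈ Finset.range (n + 1), complexity L i

/-- Concatenation (product) of two languages. -/
def prodL (S T : Set (List A)) : Set (List A) := {w | ∃ s ∈ S, ∃ t ∈ T, w = s ++ t}

/-- `powL S k` = `S^k`, the set of concatenations of `k` elements of `S`. -/
def powL (S : Set (List A)) : ℕ → Set (List A)
  | 0 => {([] : List A)}
  | k + 1 => prodL (powL S k) S

/-- `f(n) = O(n^α)`. -/
def PolyBound (f : ℕ → ℕ) (α : ℝ) : Prop :=
  ∃ C : ℝ, ∀ n : ℕ, 1 ≤ n → (f n : ℝ) ≤ C * (n : ℝ) ^ α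

/-- The `α`-dimension `d_α(L)`: infimum of the integers `k ≥ 1` such that `L ⊆ S^k`
for some language `S` with `p_S(n) = O(n^α)`, with `inf ∅ = ⊤`. -/
noncomputable def polyDim (α : ℝ) (L : Set (List A)) : ℕ∞ :=
  sInf {k : ℕ∞ | ∃ m : ℕ, k = m ∧ 1 ≤ m ∧
    ∃ S : Set (List A), PolyBound (complexity S) α ∧ L ⊆ powL S m}

/-- The accumulative `α`-dimension `d*_α(L)`. -/
noncomputable def polyDimStar (α : ℝ) (L : Set (List A)) : ℕ∞ :=
  sInf {k : ℕ∞ | ∃ m : ℕ, k = m ∧ 1 ≤ m ∧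
    ∃ S : Set (List A), PolyBound (accComplexity S) α ∧ L ⊆ powL S m}

/-- The cost `c(L)`: infimum of the `α ≥ 0` with `d_α(L) < +∞`, with `inf ∅ = ⊤`. -/
noncomputable def cost (L : Set (List A)) : ℝ≥0∞ :=
  sInf {a : ℝ≥0∞ | ∃ α : ℝ, 0 ≤ α ∧ a = ENNReal.ofReal α ∧ polyDim α L ≠ ⊤}

/-- A one-sided word is ultimately periodic if it is of the form `u v v v ⋯`. -/
def UltimatelyPeriodic (x : ℕ → A) : Prop :=
  ∃ N p : ℕ, 0 < p ∧ ∀ n : ℕ, N ≤ n → x (n + p) = x n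

/-- A two-sided word is eventually periodic if it is periodic far enough to the right
and far enough to the left. -/
def EventuallyPeriodicZ (x : ℤ → A) : Prop :=
  (∃ p : ℕ, 0 < p ∧ ∃ N : ℤ, ∀ n : ℤ, N ≤ n → x (n + p) = x n) ∧
  (∃ p : ℕ, 0 < p ∧ ∃ N : ℤ, ∀ n : ℤ, n ≤ N → x (n - p) = x n)

/-- A one-sided word is recurrent if each of its factors occurs infinitely often. -/
def Recurrent (x : ℕ → A) : Prop :=
  ∀ u ∈ Fac x, ∀ N : ℕ, ∃ i : ℕ, N ≤ i ∧ u = wordSeg x i u.length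

/-- `u` is a right special factor for the language `F`. -/
def RightSpecial (F : Set (List A)) (u : List A) : Prop :=
  u ∈ F ∧ ∃ a b : A, a ≠ b ∧ u ++ [a] ∈ F ∧ u ++ [b] ∈ F

/-- `M` is a `D`-marker set for a word with factor set `F`: every factor of length
at least `D n` contains a factor of length `n` belonging to `M`. -/
def MarkerSet (D : ℕ) (M F : Set (List A)) : Prop :=
  ∀ n : ℕ, 1 ≤ n → ∀ u ∈ F, D * n ≤ u.length →
    ∃ v ∈ M, v.length = n ∧ v <:+: u

/-- A language is factorial if it contains all factors of its members. -/
def IsFactorial (S : Set (List A)) : Prop := ∀ u ∈ S, ∀ v : List A, v <:+: u → v ∈ S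

/-- The bound `Σ_{k ∈ I_n ∩ ℕ} p_M(2^k)(1 + 4 p(3n)/2^k)` where
`I_n = (log₂(n/(2D)), log₂(2n)]`, i.e. the sum is over natural `k` with
`n/(2D) < 2^k ≤ 2n`. -/
noncomputable def markerBound (M F : Set (List A)) (D n : ℕ) : ℝ :=
  ∑ k ∈ (Finset.range (2 * n + 2)).filter (fun k => n < 2 * D * 2 ^ k ∧ 2 ^ k ≤ 2 * n),
    (complexity M (2 ^ k) : ℝ) * (1 + 4 * (complexity F (3 * n) : ℝ) / 2 ^ k)

-- The word `u = ∏_{i=1}^{∞} a b^i = a b a b b a b b b ⋯` over `{a,b}`, with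
-- `a = false`, `b = true`: position `n` carries an `a` iff `n = (i-1)(i+2)/2` for some
-- `i ≥ 1`, i.e. iff `2n = m(m+3)` for some `m ≥ 0`.
open Classical in
noncomputable def uWord (n : ℕ) : Bool :=
  if ∃ m : ℕ, 2 * n = m * (m + 3) then false else true

namespace CostWord

noncomputable def NN (α : ℝ) (n : ℕ) : ℕ := ⌈(n : ℝ) ^ α⌉₊

/-- Scale parameter, which is also the starting position of the scale. -/
noncomputable def T (α : ℝ) : ℕ → ℕ
  | 0 => 1
  | j + 1 => T α j + T α j * NN α (T α j) * (12 * (j + 1) * T α j)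

noncomputable def H (α : ℝ) (j : ℕ) : ℕ := 12 * (j + 1) * T α j

noncomputable def K (α : ℝ) (j : ℕ) : ℕ := T α j * NN α (T α j)

def per (n i : ℕ) : ℕ := i / n + (n + i % n) + 2

lemma lt_per (n i : ℕ) : n + 2 ≤ per n i := by
  unfold per
  have : n + 2 ≤ i / n + (n + i % n) + 2 := by
    generalize i / n = a
    generalize i % n = b
    omega
  exact this

def off (n i : ℕ) (c : Bool) : ℕ := if c then i / n + 1 else 0

def cond (n h i r : ℕ) (c : Bool) : Prop := r + n ≤ h ∧ r % per n i = off n i c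

def B (α : ℝ) (c : Bool) (p : ℕ) : Prop :=
  ∃ j i r, p = T α j + (i * H α j + r) ∧ i < K α j ∧ r < H α j ∧ cond (T α j) (H α j) i r c

open Classical in
noncomputable def X (α : ℝ) (p : ℕ) : Bool := decide (B α false p ∨ B α true p)

lemma T_succ (α : ℝ) (j : ℕ) : T α (j + 1) = T α j + K α j * H α j := rfl

lemma T_pos (α : ℝ) (j : ℕ) : 1 ≤ T α j := by
  induction j with
  | zero => simp [T]
  | succ j ih => rw [T_succ]; omega

lemma NN_pos (α : ℝ) (n : ℕ) (hn : 1 ≤ n) : 1 ≤ NN α n := by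
  unfold NN
  have : (0 : ℝ) < (n : ℝ) ^ α := Real.rpow_pos_of_pos (by exact_mod_cast hn) _
  exact Nat.one_le_iff_ne_zero.mpr (Nat.ceil_pos.mpr this).ne'

lemma NN_le (α : ℝ) (h1 : α < 1) (n : ℕ) (hn : 1 ≤ n) : NN α n ≤ n := by
  unfold NN
  rw [Nat.ceil_le]
  calc (n : ℝ) ^ α ≤ (n : ℝ) ^ (1 : ℝ) :=
        Real.rpow_le_rpow_of_exponent_le (by exact_mod_cast hn) h1.le
    _ = n := Real.rpow_one _

lemma H_pos (α : ℝ) (j : ℕ) : 1 ≤ H α j := by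
  have := T_pos α j
  have h : 0 < 12 * (j + 1) * T α j := by positivity
  exact h

lemma T_le_H (α : ℝ) (j : ℕ) : 12 * T α j ≤ H α j := by
  unfold H
  nlinarith [Nat.zero_le (j * T α j)]

lemma K_pos (α : ℝ) (j : ℕ) : 1 ≤ K α j := by
  have := T_pos α j
  have := NN_pos α _ this
  have h : 0 < T α j * NN α (T α j) := by positivity
  exact h

lemma T_double (α : ℝ) (j : ℕ) : 2 * T α j ≤ T α (j + 1) := by
  rw [T_succ]
  nlinarith [T_le_H α j, K_pos α j, T_pos α j, H_pos α j]

lemma T_strictMono (α : ℝ) : StrictMono (T α) := by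
  apply strictMono_nat_of_lt_succ
  intro j
  have := T_double α j; have := T_pos α j; omega

lemma T_ge (α : ℝ) (j : ℕ) : 2 ^ j ≤ T α j := by
  induction j with
  | zero => simp [T]
  | succ j ih => have := T_double α j; rw [pow_succ]; omega

lemma pos_lt {α : ℝ} {j i r : ℕ} (hi : i < K α j) (hr : r < H α j) :
    T α j + (i * H α j + r) < T α (j + 1) := by
  rw [T_succ]
  have : (i + 1) * H α j ≤ K α j * H α j := Nat.mul_le_mul_right _ hi
  nlinarith

lemma decode_j {α : ℝ} {j j' p : ℕ} (h1 : T α j ≤ p) (h2 : p < T α (j + 1))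
    (h3 : T α j' ≤ p) (h4 : p < T α (j' + 1)) : j = j' := by
  have a : j < j' + 1 := (T_strictMono α).lt_iff_lt.mp (by omega)
  have b : j' < j + 1 := (T_strictMono α).lt_iff_lt.mp (by omega)
  omega

lemma decode_i {h i r i' r' : ℕ} (hr : r < h) (hr' : r' < h)
    (e : i * h + r = i' * h + r') : i = i' ∧ r = r' := by
  have : i = i' := by
    rcases lt_trichotomy i i' with h1 | h1 | h1
    · exfalso
      have : (i + 1) * h ≤ i' * h := Nat.mul_le_mul_right _ h1
      nlinarith
    · exact h1
    · exfalso
      have : (i' + 1) * h ≤ i * h := Nat.mul_le_mul_right _ h1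
      nlinarith
  subst this
  exact ⟨rfl, by omega⟩

lemma B_iff {α : ℝ} {j i r : ℕ} (hi : i < K α j) (hr : r < H α j) (c : Bool) :
    B α c (T α j + (i * H α j + r)) ↔ cond (T α j) (H α j) i r c := by
  constructor
  · rintro ⟨j', i', r', e, hi', hr', hc⟩
    have hj : j = j' := decode_j (by omega) (pos_lt hi hr) (by omega) (e ▸ pos_lt hi' hr')
    subst hj
    obtain ⟨rfl, rfl⟩ := decode_i hr hr' (by omega : i * H α j + r = i' * H α j + r')
    exact hc
  · intro hc
    exact ⟨j, i, r, rfl, hi, hr, hc⟩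

lemma X_iff {α : ℝ} {j i r : ℕ} (hi : i < K α j) (hr : r < H α j) :
    X α (T α j + (i * H α j + r)) = true ↔
      (r + T α j ≤ H α j ∧ (r % per (T α j) i = 0 ∨ r % per (T α j) i = i / T α j + 1)) := by
  simp only [X, decide_eq_true_eq, B_iff hi hr, cond, off]
  simp
  tauto

lemma X_iff' {α : ℝ} {j i r p : ℕ} (hi : i < K α j) (hr : r < H α j)
    (hp : p = T α j + (i * H α j + r)) :
    X α p = true ↔
      (r + T α j ≤ H α j ∧ (r % per (T α j) i = 0 ∨ r % per (T α j) i = i / T α j + 1)) := by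
  subst hp
  exact X_iff hi hr

/-- same type `b`s are far apart -/
lemma B_sep {α : ℝ} {c : Bool} {j p p' : ℕ} (hp : T α j ≤ p) (h : B α c p) (h' : B α c p')
    (hlt : p < p') : p + T α j ≤ p' := by
  obtain ⟨j1, i1, r1, e1, hi1, hr1, hc1, hm1⟩ := h
  obtain ⟨j2, i2, r2, e2, hi2, hr2, hc2, hm2⟩ := h'
  have l1 := pos_lt hi1 hr1
  have l2 := pos_lt hi2 hr2
  have hj1 : j < j1 + 1 := (T_strictMono α).lt_iff_lt.mp (by omega)
  have hT : T α j ≤ T α j1 := (T_strictMono α).monotone (by omega)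
  have hj12 : j1 < j2 + 1 := (T_strictMono α).lt_iff_lt.mp (by omega)
  have hb : i1 * H α j1 + H α j1 ≤ K α j1 * H α j1 := by
    have : (i1 + 1) * H α j1 ≤ K α j1 * H α j1 := Nat.mul_le_mul_right _ hi1
    nlinarith
  rcases Nat.lt_or_ge j1 j2 with hj | hj
  · have : T α (j1 + 1) ≤ T α j2 := (T_strictMono α).monotone (by omega)
    rw [T_succ] at this
    omega
  · have : j1 = j2 := by omega
    subst this
    rcases lt_trichotomy i1 i2 with hi | hi | hi
    · have : (i1 + 1) * H α j1 ≤ i2 * H α j1 := Nat.mul_le_mul_right _ hi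
      have : i1 * H α j1 + H α j1 ≤ i2 * H α j1 := by nlinarith
      omega
    · subst hi
      have hlt' : r1 < r2 := by omega
      have hd : per (T α j1) i1 ∣ r2 - r1 :=
        (Nat.modEq_iff_dvd' hlt'.le).mp (show r1 % _ = r2 % _ by rw [hm1, hm2])
      have := Nat.le_of_dvd (by omega) hd
      have := lt_per (T α j1) i1
      omega
    · exfalso
      have : (i2 + 1) * H α j1 ≤ i1 * H α j1 := Nat.mul_le_mul_right _ hi
      have : i2 * H α j1 + H α j1 ≤ i1 * H α j1 := by nlinarith
      omega

lemma wordSeg_length {A : Type*} (x : ℕ → A) (i n : ℕ) : (wordSeg x i n).length = n := by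
  simp [wordSeg]

lemma wordSeg_congr {A : Type*} (x : ℕ → A) (i i' n : ℕ) (h : ∀ t < n, x (i + t) = x (i' + t)) :
    wordSeg x i n = wordSeg x i' n := by
  unfold wordSeg
  apply List.map_congr_left
  intro t ht
  exact h t (List.mem_range.mp ht)

/-- the marks of one type inside a window -/
lemma one_mark {α : ℝ} {c : Bool} {j p m : ℕ} (hp : T α j ≤ p) (hm : m ≤ T α j) :
    ∃ o < m + 1, ∀ t < m, (B α c (p + t) ↔ t = o) := by
  by_cases h : ∃ t < m, B α c (p + t)
  · obtain ⟨o, ho, hB⟩ := h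
    refine ⟨o, by omega, fun t ht => ⟨fun hBt => ?_, fun e => e ▸ hB⟩⟩
    rcases lt_trichotomy t o with h | h | h
    · have := B_sep (j := j) (by omega) hBt hB (by omega : p + t < p + o); omega
    · exact h
    · have := B_sep (j := j) (by omega) hB hBt (by omega : p + o < p + t); omega
  · push Not at h
    exact ⟨m, by omega, fun t ht => ⟨fun hB => absurd hB (h t ht), fun e => by omega⟩⟩

def mk (m : ℕ) (o : ℕ × ℕ) : List Bool :=
  (List.range m).map fun t => decide (t = o.1 ∨ t = o.2)

lemma far_window {α : ℝ} {j p m : ℕ} (hp : T α j ≤ p) (hm : m ≤ T α j) :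
    ∃ o ∈ Finset.range (m + 1) ×ˢ Finset.range (m + 1), wordSeg (X α) p m = mk m o := by
  obtain ⟨o, ho, h⟩ := one_mark (c := false) hp hm
  obtain ⟨o', ho', h'⟩ := one_mark (c := true) hp hm
  refine ⟨(o, o'), by simp; omega, ?_⟩
  unfold wordSeg mk
  apply List.map_congr_left
  intro t ht
  have ht := List.mem_range.mp ht
  simp only [X, h t ht, h' t ht]

lemma per_le {α : ℝ} (h1 : α < 1) {j i : ℕ} (hi : i < K α j) : per (T α j) i ≤ 3 * T α j ∧
    i / T α j < T α j := by
  have a := T_pos α j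
  have b := Nat.mod_lt i a
  have c : i / T α j < NN α (T α j) := Nat.div_lt_of_lt_mul hi
  have d := NN_le α h1 _ a
  unfold per
  omega

lemma mid_window {α : ℝ} (h1 : α < 1) {j i r m : ℕ} (hi : i < K α j) (hr : r < H α j)
    (hm : T α j ≤ m) :
    ∃ o ∈ Finset.range (K α j) ×ˢ (Finset.range (3 * m) ∪ Finset.Ico (H α j - 2 * m) (H α j)),
      wordSeg (X α) (T α j + (i * H α j + r)) m
        = wordSeg (X α) (T α j + (o.1 * H α j + o.2)) m := by
  by_cases h : r + m + T α j ≤ H α j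
  · have hper := per_le h1 hi
    have hp : 0 < per (T α j) i := by have := lt_per (T α j) i; omega
    have hlt := Nat.mod_lt r hp
    have hle := Nat.mod_le r (per (T α j) i)
    refine ⟨(i, r % per (T α j) i), ?_, ?_⟩
    · simp; omega
    · apply wordSeg_congr
      intro t ht
      have ht0 := T_pos α j
      rw [Bool.eq_iff_iff, X_iff' (r := r + t) hi (by omega) (by ring),
        X_iff' (r := r % per (T α j) i + t) hi (by omega) (by ring)]
      simp only [Nat.mod_add_mod]
      constructor
      · rintro ⟨_, h⟩; exact ⟨by omega, h⟩
      · rintro ⟨_, h⟩; exact ⟨by omega, h⟩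
  · refine ⟨(i, r), ?_, rfl⟩
    simp; omega

lemma count (α : ℝ) (h1 : α < 1) (m : ℕ) (hm : 1 ≤ m) :
    ∃ j, T α j ≤ m ∧ complexity (Fac (X α)) m ≤ m + K α j * (5 * m) + (m + 1) * (m + 1) := by
  classical
  obtain ⟨j, hj1, hj2⟩ : ∃ j, T α j ≤ m ∧ m < T α (j + 1) := by
    have hex : ∃ j, m < T α j :=
      ⟨m, lt_of_lt_of_le Nat.lt_two_pow_self (T_ge α m)⟩
    have hne : Nat.find hex ≠ 0 := by
      intro h0
      have := Nat.find_spec hex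
      rw [h0] at this
      simp [T] at this
      omega
    obtain ⟨j, hj⟩ := Nat.exists_eq_succ_of_ne_zero hne
    refine ⟨j, ?_, ?_⟩
    · have := Nat.find_min hex (m := j) (by omega)
      omega
    · have := Nat.find_spec hex
      rwa [hj] at this
  refine ⟨j, hj1, ?_⟩
  let A1 := (Finset.range (T α j)).image fun p => wordSeg (X α) p m
  let A2 := (Finset.range (K α j) ×ˢ (Finset.range (3 * m) ∪
    Finset.Ico (H α j - 2 * m) (H α j))).image
      fun o => wordSeg (X α) (T α j + (o.1 * H α j + o.2)) m
  let A3 := (Finset.range (m + 1) ×ˢ Finset.range (m + 1)).image (mk m)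
  have hsub : {u ∈ Fac (X α) | u.length = m} ⊆ ((A1 ∪ A2 ∪ A3 : Finset (List Bool)) : Set _) := by
    rintro u ⟨⟨p, n, rfl⟩, hu⟩
    rw [wordSeg_length] at hu
    subst hu
    rw [Finset.mem_coe, Finset.mem_union, Finset.mem_union]
    rcases Nat.lt_or_ge p (T α j) with hp | hp
    · left; left
      exact Finset.mem_image.mpr ⟨p, Finset.mem_range.mpr hp, rfl⟩
    rcases Nat.lt_or_ge p (T α (j + 1)) with hp2 | hp2
    · left; right
      have hr := Nat.mod_lt (p - T α j) (H_pos α j)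
      have hi : (p - T α j) / H α j < K α j := by
        apply Nat.div_lt_of_lt_mul
        rw [T_succ] at hp2
        rw [mul_comm]; omega
      obtain ⟨o, ho, e⟩ := mid_window h1 hi hr hj1
      refine Finset.mem_image.mpr ⟨o, ho, ?_⟩
      rw [← e]
      congr 1
      rw [Nat.div_add_mod']
      omega
    · right
      obtain ⟨o, ho, e⟩ := far_window hp2 hj2.le
      exact Finset.mem_image.mpr ⟨o, ho, e.symm⟩
  have hc : complexity (Fac (X α)) m ≤ (A1 ∪ A2 ∪ A3).card := by
    unfold complexity
    rw [← Set.ncard_coe_finset]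
    exact Set.ncard_le_ncard hsub (Finset.finite_toSet _)
  have c1 : A1.card ≤ m := (Finset.card_image_le).trans (by simpa using hj1)
  have c2 : A2.card ≤ K α j * (5 * m) := by
    refine (Finset.card_image_le).trans ?_
    rw [Finset.card_product, Finset.card_range]
    apply Nat.mul_le_mul_left
    refine (Finset.card_union_le _ _).trans ?_
    simp; omega
  have c3 : A3.card ≤ (m + 1) * (m + 1) := (Finset.card_image_le).trans (by simp)
  have := Finset.card_union_le (A1 ∪ A2) A3
  have := Finset.card_union_le A1 A2
  omega

lemma polyBound (α : ℝ) (h0 : 0 < α) (h1 : α < 1) :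
    PolyBound (complexity (Fac (X α))) (2 + α) := by
  refine ⟨15, fun m hm => ?_⟩
  obtain ⟨j, hj, hc⟩ := count α h1 m hm
  have hm' : (1 : ℝ) ≤ m := by exact_mod_cast hm
  have hT : (T α j : ℝ) ≤ m := by exact_mod_cast hj
  have hN : (NN α (T α j) : ℝ) ≤ 2 * (m : ℝ) ^ α := by
    have a : (NN α (T α j) : ℝ) < (T α j : ℝ) ^ α + 1 :=
      Nat.ceil_lt_add_one (by positivity)
    have b : (T α j : ℝ) ^ α ≤ (m : ℝ) ^ α := Real.rpow_le_rpow (by positivity) hT h0.le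
    have c : 1 ≤ (m : ℝ) ^ α := Real.one_le_rpow hm' h0.le
    linarith
  have hK : (K α j : ℝ) ≤ m * (2 * (m : ℝ) ^ α) := by
    unfold K; push_cast
    gcongr
  have hc' : (complexity (Fac (X α)) m : ℝ) ≤ m + K α j * (5 * m) + (m + 1) * (m + 1) := by
    exact_mod_cast hc
  have c : 1 ≤ (m : ℝ) ^ α := Real.one_le_rpow hm' h0.le
  rw [Real.rpow_add (by positivity), Real.rpow_two]
  have e1 : (K α j : ℝ) * (5 * m) ≤ m * (2 * (m : ℝ) ^ α) * (5 * m) := by gcongr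
  have e2 : (m : ℝ) ^ 2 * 1 ≤ (m : ℝ) ^ 2 * (m : ℝ) ^ α := by gcongr
  nlinarith

lemma exists_long {S : Set (List Bool)} (k : ℕ) (hk : 1 ≤ k) (w : List Bool) (hw : w ∈ powL S k) :
    ∃ s ∈ S, s <:+: w ∧ w.length ≤ k * s.length := by
  induction k, hk using Nat.le_induction generalizing w with
  | base =>
    obtain ⟨u, hu, s, hs, rfl⟩ := hw
    have hu : u = [] := hu
    subst hu
    exact ⟨s, hs, by simp, by simp⟩
  | succ k hk ih =>
    obtain ⟨u, hu, s, hs, rfl⟩ := hw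
    obtain ⟨s', hs', hi, hl⟩ := ih u hu
    rcases le_total s.length s'.length with h | h
    · refine ⟨s', hs', hi.trans (List.infix_append' [] u s), ?_⟩
      rw [List.length_append]; nlinarith
    · refine ⟨s, hs, (List.suffix_append u s).isInfix, ?_⟩
      rw [List.length_append]; nlinarith

lemma infix_wordSeg {A : Type*} {x : ℕ → A} {i n : ℕ} {s : List A} (h : s <:+: wordSeg x i n) :
    ∃ r, r + s.length ≤ n ∧ s = wordSeg x (i + r) s.length := by
  obtain ⟨a, b, e⟩ := h
  have hl := congrArg List.length e
  rw [wordSeg_length] at hl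
  simp only [List.length_append] at hl
  refine ⟨a.length, by omega, ?_⟩
  apply List.ext_getElem
  · rw [wordSeg_length]
  · intro t h1 h2
    have : (a ++ s ++ b)[a.length + t]'(by simp; omega) = s[t] := by
      rw [List.getElem_append_left (by simp; omega), List.getElem_append_right (by omega)]
      simp
    rw [← this]
    simp only [e]
    simp [wordSeg, add_assoc]

lemma wordSeg_inj {A : Type*} {x : ℕ → A} {i i' n t : ℕ} (h : wordSeg x i n = wordSeg x i' n)
    (ht : t < n) : x (i + t) = x (i' + t) := by
  unfold wordSeg at h
  have := List.map_inj_left.mp h t (List.mem_range.mpr ht)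
  exact this

/-- arithmetic core: the periodic pattern determines its parameters -/
lemma pattern {n q l q' l' r r' : ℕ} (hq : q < n) (hl : n ≤ l) (hl2 : l < 2 * n)
    (hq' : q' < n) (hl' : n ≤ l') (hl2' : l' < 2 * n)
    (h : ∀ t < 6 * n, ((r + t) % (q + l + 2) = 0 ∨ (r + t) % (q + l + 2) = q + 1) ↔
      ((r' + t) % (q' + l' + 2) = 0 ∨ (r' + t) % (q' + l' + 2) = q' + 1)) :
    q = q' ∧ l = l' := by
  obtain ⟨t0, ht0, e0⟩ : ∃ t0 < q + l + 2, (r + t0) % (q + l + 2) = 0 := by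
    have := Nat.mod_lt r (show 0 < q + l + 2 by omega)
    by_cases h0 : r % (q + l + 2) = 0
    · exact ⟨0, by omega, by simpa using h0⟩
    · refine ⟨q + l + 2 - r % (q + l + 2), by omega, ?_⟩
      rw [← Nat.mod_add_mod, Nat.add_sub_of_le this.le, Nat.mod_self]
  have hP : ∀ d, (r + (t0 + d)) % (q + l + 2) = d % (q + l + 2) := by
    intro d
    rw [← add_assoc, ← Nat.mod_add_mod, e0, zero_add]
  have hP' : ∀ d, (r' + (t0 + d)) % (q' + l' + 2) =
      ((r' + t0) % (q' + l' + 2) + d) % (q' + l' + 2) := by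
    intro d
    rw [← add_assoc, Nat.mod_add_mod]
  have a1 := (h (t0 + (q + 1)) (by omega)).mp (by
    right; rw [hP]; exact Nat.mod_eq_of_lt (by omega))
  rw [hP'] at a1
  have e0' : (r' + t0) % (q' + l' + 2) = 0 := by
    rcases (h t0 (by omega)).mp (Or.inl e0) with a | a
    · exact a
    · exfalso
      rw [a, Nat.mod_eq_of_lt (by omega)] at a1
      omega
  rw [e0', zero_add, Nat.mod_eq_of_lt (by omega)] at a1
  have hqq : q = q' := by omega
  refine ⟨hqq, ?_⟩
  rcases lt_trichotomy l l' with hll | hll | hll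
  · exfalso
    have a2 := (h (t0 + (q + l + 2)) (by omega)).mp (by left; rw [hP, Nat.mod_self])
    rw [hP', e0', zero_add, Nat.mod_eq_of_lt (by omega)] at a2
    omega
  · exact hll
  · exfalso
    have a2 := (h (t0 + (q' + l' + 2)) (by omega)).mpr (by
      left; rw [hP', e0', zero_add, Nat.mod_self])
    rw [hP, Nat.mod_eq_of_lt (by omega)] at a2
    omega

lemma lower_count (α : ℝ) (h1 : α < 1) (k : ℕ) (hk : 1 ≤ k) (S : Set (List Bool))
    (hS : Fac (X α) ⊆ powL S k) (j : ℕ) (hj : k ≤ j + 1) :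
    K α j ≤ ∑ m ∈ Finset.Icc 1 (H α j), complexity S m := by
  classical
  have hT := T_pos α j
  have hTH := T_le_H α j
  have key : ∀ i, ∃ s, i < K α j → s ∈ S ∧ 6 * T α j ≤ s.length ∧ s.length ≤ H α j ∧
      ∃ r, r + s.length + T α j ≤ H α j ∧
        s = wordSeg (X α) (T α j + i * H α j + r) s.length := by
    intro i
    obtain ⟨s, hs, hi, hl⟩ := exists_long k hk (wordSeg (X α) (T α j + i * H α j) (H α j - T α j))
      (hS ⟨_, _, rfl⟩)
    obtain ⟨r, hr, e⟩ := infix_wordSeg hi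
    rw [wordSeg_length] at hl
    refine ⟨s, fun _ => ⟨hs, ?_, by omega, r, by omega, e⟩⟩
    by_contra hcon
    push Not at hcon
    have : k * s.length ≤ (j + 1) * (6 * T α j) := Nat.mul_le_mul hj hcon.le
    have h2 : H α j = 2 * ((j + 1) * (6 * T α j)) := by unfold H; ring
    have h3 : 6 * T α j ≤ (j + 1) * (6 * T α j) := Nat.le_mul_of_pos_left _ (by omega)
    omega
  choose s hs using key
  have hinj : Set.InjOn s (Finset.range (K α j) : Set ℕ) := by
    intro i hi i' hi' e
    have hi : i < K α j := by simpa using hi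
    have hi' : i' < K α j := by simpa using hi'
    obtain ⟨_, hl, _, r, hr, es⟩ := hs i hi
    obtain ⟨_, hl', _, r', hr', es'⟩ := hs i' hi'
    rw [← e] at es' hr' hl'
    have ew := es.symm.trans es'
    have p1 := per_le h1 hi
    have p1' := per_le h1 hi'
    have m1 := Nat.mod_lt i hT
    have m1' := Nat.mod_lt i' hT
    have := pattern (n := T α j) (q := i / T α j) (l := T α j + i % T α j)
      (q' := i' / T α j) (l' := T α j + i' % T α j) (r := r) (r' := r')
      p1.2 (by omega) (by omega) p1'.2 (by omega) (by omega) (by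
        intro t ht
        have := wordSeg_inj ew (show t < (s i).length by omega)
        rw [Bool.eq_iff_iff, X_iff' (r := r + t) hi (by omega) (by ring),
          X_iff' (r := r' + t) hi' (by omega) (by ring)] at this
        have g1 : r + t + T α j ≤ H α j := by omega
        have g2 : r' + t + T α j ≤ H α j := by omega
        simpa only [g1, g2, true_and, per] using this)
    rw [← Nat.div_add_mod i (T α j), ← Nat.div_add_mod i' (T α j), this.1,
      show i % T α j = i' % T α j by omega]
  have hfin : ∀ m, {u ∈ S | u.length = m}.Finite := fun m =>
    (List.finite_length_eq Bool m).subset fun u hu => hu.2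
  calc K α j = ((Finset.range (K α j)).image s).card := by
        rw [Finset.card_image_of_injOn hinj, Finset.card_range]
    _ ≤ ((Finset.Icc 1 (H α j)).biUnion fun m => (hfin m).toFinset).card := by
        apply Finset.card_le_card
        intro u hu
        obtain ⟨i, hi, rfl⟩ := Finset.mem_image.mp hu
        obtain ⟨a, b, c, _⟩ := hs i (Finset.mem_range.mp hi)
        rw [Finset.mem_biUnion]
        refine ⟨(s i).length, Finset.mem_Icc.mpr ⟨by omega, c⟩, ?_⟩
        simpa using a
    _ ≤ ∑ m ∈ Finset.Icc 1 (H α j), ((hfin m).toFinset).card := Finset.card_biUnion_le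
    _ = ∑ m ∈ Finset.Icc 1 (H α j), complexity S m := by
        apply Finset.sum_congr rfl
        intro m _
        unfold complexity
        rw [Set.ncard_eq_toFinset_card _ (hfin m)]

lemma main_lower (α : ℝ) (h0 : 0 < α) (h1 : α < 1) (β : ℝ) (hβ : β < α) (k : ℕ) (hk : 1 ≤ k)
    (S : Set (List Bool)) (hb : PolyBound (complexity S) β) : ¬ Fac (X α) ⊆ powL S k := by
  intro hS
  obtain ⟨C, hC⟩ := hb
  obtain ⟨D, hD⟩ : ∃ D, D = max C 1 := ⟨_, rfl⟩
  obtain ⟨γ, hγ⟩ : ∃ γ, γ = max β 0 := ⟨_, rfl⟩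
  have hD1 : 1 ≤ D := hD ▸ le_max_right _ _
  have hγ0 : 0 ≤ γ := hγ ▸ le_max_right _ _
  have hγα : γ < α := by rw [hγ]; exact max_lt hβ h0
  have key : ∀ j : ℕ, k ≤ j + 1 →
      ((2 : ℝ) ^ (α - γ)) ^ j ≤ D * 144 * ((j : ℝ) + 1) ^ 2 := by
    intro j hj
    have hT := T_pos α j
    have hT' : (0 : ℝ) < T α j := by exact_mod_cast hT
    have hH := H_pos α j
    have hH' : (0 : ℝ) < H α j := by exact_mod_cast hH
    have l1 : (K α j : ℝ) ≤ ∑ m ∈ Finset.Icc 1 (H α j), (complexity S m : ℝ) := by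
      exact_mod_cast lower_count α h1 k hk S hS j hj
    have l2 : ∑ m ∈ Finset.Icc 1 (H α j), (complexity S m : ℝ) ≤
        ∑ m ∈ Finset.Icc 1 (H α j), D * (H α j : ℝ) ^ γ := by
      apply Finset.sum_le_sum
      intro m hm
      obtain ⟨hm1, hm2⟩ := Finset.mem_Icc.mp hm
      have hm1' : (1 : ℝ) ≤ m := by exact_mod_cast hm1
      calc (complexity S m : ℝ) ≤ C * (m : ℝ) ^ β := hC m hm1
        _ ≤ D * (m : ℝ) ^ β := by
            gcongr
            exact hD ▸ le_max_left _ _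
        _ ≤ D * (m : ℝ) ^ γ := by
            have : (m : ℝ) ^ β ≤ (m : ℝ) ^ γ :=
              Real.rpow_le_rpow_of_exponent_le hm1' (hγ ▸ le_max_left _ _)
            gcongr
        _ ≤ D * (H α j : ℝ) ^ γ := by
            have : (m : ℝ) ≤ H α j := by exact_mod_cast hm2
            gcongr
    rw [Finset.sum_const, Nat.card_Icc, nsmul_eq_mul, Nat.add_sub_cancel] at l2
    have l3 : (T α j : ℝ) * (T α j : ℝ) ^ α ≤ K α j := by
      unfold K NN; push_cast
      gcongr
      exact Nat.le_ceil _
    have hHe : (H α j : ℝ) = (12 * ((j : ℝ) + 1)) * T α j := by unfold H; push_cast; ring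
    have hj1 : (1 : ℝ) ≤ 12 * ((j : ℝ) + 1) := by
      have : (0 : ℝ) ≤ j := by positivity
      linarith
    have l4 : (H α j : ℝ) ^ γ ≤ (12 * ((j : ℝ) + 1)) * (T α j : ℝ) ^ γ := by
      rw [hHe, Real.mul_rpow (by positivity) (by positivity)]
      gcongr
      calc (12 * ((j : ℝ) + 1)) ^ γ ≤ (12 * ((j : ℝ) + 1)) ^ (1 : ℝ) :=
            Real.rpow_le_rpow_of_exponent_le hj1 (by linarith)
        _ = _ := Real.rpow_one _
    have l5 : (T α j : ℝ) * (T α j : ℝ) ^ α ≤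
        (12 * ((j : ℝ) + 1)) * T α j * (D * ((12 * ((j : ℝ) + 1)) * (T α j : ℝ) ^ γ)) := by
      calc _ ≤ (H α j : ℝ) * (D * (H α j : ℝ) ^ γ) := l3.trans (l1.trans l2)
        _ ≤ (H α j : ℝ) * (D * ((12 * ((j : ℝ) + 1)) * (T α j : ℝ) ^ γ)) := by gcongr
        _ = _ := by rw [hHe]
    have hsplit : (T α j : ℝ) ^ α = (T α j : ℝ) ^ (α - γ) * (T α j : ℝ) ^ γ := by
      rw [← Real.rpow_add hT']; congr 1; ring
    have hpos : 0 < (T α j : ℝ) * (T α j : ℝ) ^ γ := by positivity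
    have l6 : (T α j : ℝ) ^ (α - γ) ≤ D * 144 * ((j : ℝ) + 1) ^ 2 := by
      rw [hsplit] at l5
      refine le_of_mul_le_mul_right ?_ hpos
      nlinarith [l5]
    refine le_trans ?_ l6
    rw [← Real.rpow_natCast, ← Real.rpow_mul (by norm_num), mul_comm,
      Real.rpow_mul (by norm_num), Real.rpow_natCast]
    have : ((2 : ℝ) ^ j) ≤ T α j := by exact_mod_cast T_ge α j
    exact Real.rpow_le_rpow (by positivity) this (by linarith)
  obtain ⟨b, hbdef⟩ : ∃ b, b = (2 : ℝ) ^ (α - γ) := ⟨_, rfl⟩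
  rw [← hbdef] at key
  have hb1 : 1 < b := hbdef ▸ Real.one_lt_rpow (by norm_num) (by linarith)
  have ht := tendsto_pow_const_div_const_pow_of_one_lt 2 hb1
  have hpos : (0 : ℝ) < 1 / (D * 576) := by positivity
  obtain ⟨j, hjlt, hjk⟩ := ((ht.eventually_lt_const hpos).and
    (Filter.eventually_ge_atTop (k + 1))).exists
  have hbj : 0 < b ^ j := by positivity
  have h2 := key j (by omega)
  rw [div_lt_div_iff₀ hbj (by positivity)] at hjlt
  have hj1 : (1 : ℝ) ≤ j := by exact_mod_cast (by omega : 1 ≤ j)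
  have h3 : ((j : ℝ) + 1) ^ 2 ≤ 4 * (j : ℝ) ^ 2 := by nlinarith
  have h4 : D * 144 * ((j : ℝ) + 1) ^ 2 ≤ D * 144 * (4 * (j : ℝ) ^ 2) := by gcongr
  nlinarith

end CostWord

/-- for each `0 < α < 1` there is `x ∈ {a,b}^ℕ` with
`p_x(n) = O(n^{2+α})` and `c(x) ≥ α`; equivalently, for every `β < α`, every `k ≥ 1`
and every `S` with `p_S(n) = O(n^β)`, one has `Fac(x) ⊄ S^k`. -/
theorem stmt19 (α : ℝ) (h0 : 0 < α) (h1 : α < 1) :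
    ∃ x : ℕ → Bool,
      PolyBound (complexity (Fac x)) (2 + α) ∧
      ENNReal.ofReal α ≤ cost (Fac x) ∧
      ∀ β : ℝ, β < α → ∀ k : ℕ, 1 ≤ k → ∀ S : Set (List Bool),
        PolyBound (complexity S) β → ¬ Fac x ⊆ powL S k := by
  refine ⟨CostWord.X α, CostWord.polyBound α h0 h1, ?_, CostWord.main_lower α h0 h1⟩
  apply le_sInf
  rintro a ⟨β, hβ0, rfl, hne⟩
  apply ENNReal.ofReal_le_ofReal
  by_contra hlt
  push Not at hlt
  apply hne
  unfold polyDim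
  rw [sInf_eq_top]
  rintro k ⟨m, rfl, hm, S, hS, hsub⟩
  exact absurd hsub (CostWord.main_lower α h0 h1 β hlt m hm S hS)
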